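/- For every real t ≥ 1 there exists n ∈ ℕ such that: (a) for all indices 0 ≤ a < b ≤ 4^n, Metric.hausdorffDist (⋃_{a ≤ k < b} segment ℝ (K_n k) (K_n (k+1))) (segment ℝ (K_n a) (K_n b)) ≤ 6 · dist (K_n a) (K_n b); and (b) for every m ≥ 1 and every sequence of indices q : Fin (m+1) → ℕ with q 0 = 0, q m = 4^n, q j ≤ 4^n for all j, and |q (j+1) − q j| = 1 for all j < m (i.e., a walk in the path graph F_n from one extreme vertex to the other), the length ∑_{j<m} dist (K_n (q j)) (K_n (q (j+1))) exceeds t · dist (K_n 0) (K_n (4^n)). In particular F_n is a 6-Hausdorff-spanner but not a t-spanner. -/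

import Mathlib

/-!
In complex coordinates the Koch polyline of stage `n + 1` consists of four copies of the polyline of
stage `n`, scaled by `1 / 3`. Its stage-`n` edges thus have length `3⁻ⁿ`, so that a walk between the
extreme vertices, having at least `4ⁿ` steps, is at least `(4 / 3)ⁿ` long.

The Hausdorff bound holds at every stage because arcs have diameter at most six times their chord.
If the endpoints of an arc lie in the same copy, rescale. If they lie in copies that are not
adjacent, their real parts differ by at least `1 / 6`, while the whole polyline has diameter at most
`1`. In adjacent copies, the arc splits at the common vertex into two arcs of diameter at most three
times their chords (by the same rescaling argument), and these two chords make an angle of at least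
`60°`, so that the sum of their lengths is at most twice the length of the chord of the whole arc.
-/

/-- The point of the Euclidean plane with the given coordinates. -/
noncomputable def pt (x y : ℝ) : EuclideanSpace ℝ (Fin 2) :=
  (WithLp.equiv 2 (Fin 2 → ℝ)).symm ![x, y]

/-- Rotation by 90 degrees counterclockwise: `ρ(x, y) = (−y, x)`. -/
noncomputable def rot90 (x : EuclideanSpace ℝ (Fin 2)) : EuclideanSpace ℝ (Fin 2) :=
  pt (-x 1) (x 0)

/-- The vertices of the Koch polyline: `koch n k` is the `k`-th vertex (for `0 ≤ k ≤ 4^n`)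
of the `n`-th stage `K_n` of the Koch curve construction, starting from the unit segment
from `(0,0)` to `(1,0)`.  Each edge `ab` of `K_n` is replaced in `K_{n+1}` by the four edges
through `a`, `a + (b−a)/3`, `(a+b)/2 + (√3/6)·ρ(b−a)`, `a + 2(b−a)/3`, `b`. -/
noncomputable def koch : ℕ → ℕ → EuclideanSpace ℝ (Fin 2)
  | 0, k => if k = 0 then pt 0 0 else pt 1 0
  | n + 1, j =>
      let a := koch n (j / 4)
      let b := koch n (j / 4 + 1)
      if j % 4 = 0 then a
      else if j % 4 = 1 then a + (3 : ℝ)⁻¹ • (b - a)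
      else if j % 4 = 2 then (2 : ℝ)⁻¹ • (a + b) + (Real.sqrt 3 / 6) • rot90 (b - a)
      else a + (2 / 3 : ℝ) • (b - a)

open AffineMap ComplexConjugate

/-! ### Walks and polylines -/

theorem exists_eq_mul_add_of_le_mul {N m j : ℕ} (hm : 0 < m) (hj : j ≤ N * m) :
    ∃ i < m, ∃ r ≤ N, j = N * i + r := by
  rcases hj.lt_or_eq with h | rfl
  · have hN : 0 < N := Nat.pos_of_mul_pos_right (Nat.zero_lt_of_lt h)
    exact ⟨j / N, Nat.div_lt_of_lt_mul h, j % N, (Nat.mod_lt _ hN).le, (Nat.div_add_mod j N).symm⟩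
  · obtain ⟨m, rfl⟩ := Nat.exists_eq_succ_of_ne_zero hm.ne'
    exact ⟨m, m.lt_succ_self, N, le_rfl, N.mul_succ m⟩

theorem apply_last_le_add_of_succ_le {m : ℕ} {q : Fin (m + 1) → ℕ}
    (hq : ∀ j : Fin m, q j.succ ≤ q j.castSucc + 1) : q (Fin.last m) ≤ q 0 + m := by
  suffices h : ∀ j : Fin (m + 1), q j ≤ q 0 + j from h (Fin.last m)
  intro j
  induction j using Fin.induction with
  | zero => simp
  | succ j ih => simpa [add_assoc] using (hq j).trans (Nat.succ_le_succ ih)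

theorem hausdorffDist_le_of_subset_closedBall {X : Type*} [PseudoMetricSpace X] {s t : Set X}
    {x : X} {r : ℝ} (hxs : x ∈ s) (hxt : x ∈ t) (hs : s ⊆ Metric.closedBall x r)
    (ht : t ⊆ Metric.closedBall x r) : Metric.hausdorffDist s t ≤ r :=
  Metric.hausdorffDist_le_of_mem_dist (dist_nonneg.trans (hs hxs))
    (fun _ hy => ⟨x, hxt, hs hy⟩) (fun _ hy => ⟨x, hxs, ht hy⟩)

theorem hausdorffDist_polyline_segment_le {E : Type*} [SeminormedAddCommGroup E] [NormedSpace ℝ E]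
    {p : ℕ → E} {a b : ℕ} {r : ℝ} (hab : a < b)
    (hp : ∀ k, a ≤ k → k ≤ b → dist (p a) (p k) ≤ r) :
    Metric.hausdorffDist (⋃ k ∈ Finset.Ico a b, segment ℝ (p k) (p (k + 1)))
      (segment ℝ (p a) (p b)) ≤ r := by
  have hball : ∀ k, a ≤ k → k ≤ b → p k ∈ Metric.closedBall (p a) r := fun k hak hkb =>
    Metric.mem_closedBall'.mpr (hp k hak hkb)
  have hsegment : ∀ {k l}, a ≤ k → k ≤ l → l ≤ b →
      segment ℝ (p k) (p l) ⊆ Metric.closedBall (p a) r := fun hak hkl hlb =>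
    (convex_closedBall _ _).segment_subset (hball _ hak (hkl.trans hlb))
      (hball _ (hak.trans hkl) hlb)
  refine hausdorffDist_le_of_subset_closedBall ?_ (left_mem_segment _ _ _)
    (Set.iUnion₂_subset fun k hk => ?_) (hsegment le_rfl hab.le le_rfl)
  · exact Set.mem_biUnion (Finset.mem_Ico.mpr ⟨le_rfl, hab⟩) (left_mem_segment _ _ _)
  · obtain ⟨hak, hkb⟩ := Finset.mem_Ico.mp hk
    exact hsegment hak k.le_succ hkb

/-! ### Self-similarity in complex coordinates -/

/-- The vertices of the Koch polyline as complex numbers, so that the similarities relating its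
parts become the complex affine maps `AffineMap.lineMap a b : ℂ → ℂ`. -/
noncomputable def kochComplex (n k : ℕ) : ℂ :=
  Complex.orthonormalBasisOneI.repr.symm (koch n k)

/-- The vertices of the generator of the Koch curve, the five-vertex polyline that replaces the
unit segment; all indices from `4` on give the endpoint `1`. -/
noncomputable def kochGenerator : ℕ → ℂ
  | 0 => 0
  | 1 => ⟨1 / 3, 0⟩
  | 2 => ⟨1 / 2, √3 / 6⟩
  | 3 => ⟨2 / 3, 0⟩
  | _ => 1

theorem re_lineMap (a b z : ℂ) :
    (lineMap a b z : ℂ).re = z.re * (b.re - a.re) - z.im * (b.im - a.im) + a.re := by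
  simp [lineMap_apply]

theorem im_lineMap (a b z : ℂ) :
    (lineMap a b z : ℂ).im = z.re * (b.im - a.im) + z.im * (b.re - a.re) + a.im := by
  simp [lineMap_apply]

theorem dist_kochComplex (n a b : ℕ) :
    dist (kochComplex n a) (kochComplex n b) = dist (koch n a) (koch n b) :=
  LinearIsometryEquiv.dist_map _ _ _

theorem kochComplex_zero_zero : kochComplex 0 0 = 0 := by
  simp [kochComplex, koch, pt]

theorem kochComplex_zero_one : kochComplex 0 1 = 1 := by
  simp [kochComplex, koch, pt]

theorem kochComplex_succ (n k : ℕ) {i : ℕ} (hi : i ≤ 4) :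
    kochComplex (n + 1) (4 * k + i) =
      lineMap (kochComplex n k) (kochComplex n (k + 1)) (kochGenerator i) := by
  have of_lt : ∀ k i, i < 4 → kochComplex (n + 1) (4 * k + i) =
      lineMap (kochComplex n k) (kochComplex n (k + 1)) (kochGenerator i) := by
    intro k i hi
    have hdiv : (4 * k + i) / 4 = k := by omega
    have hmod : (4 * k + i) % 4 = i := by omega
    simp only [kochComplex, koch, hdiv, hmod, lineMap_apply]
    apply Complex.ext <;> interval_cases i <;> simp [kochGenerator, rot90, pt] <;> ring
  rcases hi.lt_or_eq with hi | rfl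
  · exact of_lt k i hi
  · simpa [kochGenerator, mul_add] using of_lt (k + 1) 0 four_pos

theorem kochComplex_add (n m k : ℕ) {j : ℕ} (hj : j ≤ 4 ^ m) :
    kochComplex (n + m) (4 ^ m * k + j) =
      lineMap (kochComplex n k) (kochComplex n (k + 1)) (kochComplex m j) := by
  induction m generalizing j with
  | zero =>
    obtain rfl | rfl : j = 0 ∨ j = 1 := by rw [pow_zero] at hj; omega
    · simp [kochComplex_zero_zero]
    · simp [kochComplex_zero_one]
  | succ m ih =>
    obtain ⟨q, hq, i, hi, rfl⟩ := exists_eq_mul_add_of_le_mul (by positivity) (pow_succ' 4 m ▸ hj)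
    have hindex : 4 ^ (m + 1) * k + (4 * q + i) = 4 * (4 ^ m * k + q) + i := by ring
    rw [hindex, ← add_assoc, kochComplex_succ _ _ hi, add_assoc (4 ^ m * k), ih hq.le, ih hq,
      kochComplex_succ _ _ hi, apply_lineMap]

theorem kochComplex_one {i : ℕ} (hi : i ≤ 4) : kochComplex 1 i = kochGenerator i := by
  simpa [kochComplex_zero_zero, kochComplex_zero_one, lineMap_apply] using kochComplex_succ 0 0 hi

theorem kochComplex_piece (n : ℕ) {i j : ℕ} (hi : i < 4) (hj : j ≤ 4 ^ n) :
    kochComplex (n + 1) (4 ^ n * i + j) =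
      lineMap (kochGenerator i) (kochGenerator (i + 1)) (kochComplex n j) := by
  rw [add_comm n, kochComplex_add 1 n i hj, kochComplex_one hi.le, kochComplex_one hi]

theorem dist_kochGenerator_succ {i : ℕ} (hi : i < 4) :
    dist (kochGenerator i) (kochGenerator (i + 1)) = 1 / 3 := by
  have h3 : √3 ^ 2 = 3 := Real.sq_sqrt zero_le_three
  rw [Complex.dist_eq_re_im, Real.sqrt_eq_iff_eq_sq (by positivity) (by positivity)]
  interval_cases i <;> simp [kochGenerator] <;> linarith

theorem dist_kochComplex_piece (n : ℕ) {i j k : ℕ} (hi : i < 4) (hj : j ≤ 4 ^ n)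
    (hk : k ≤ 4 ^ n) :
    dist (kochComplex (n + 1) (4 ^ n * i + j)) (kochComplex (n + 1) (4 ^ n * i + k)) =
      dist (kochComplex n j) (kochComplex n k) / 3 := by
  rw [kochComplex_piece n hi hj, kochComplex_piece n hi hk, dist_lineMap_lineMap,
    dist_kochGenerator_succ hi, mul_one_div]

theorem dist_kochComplex_succ (n : ℕ) {k : ℕ} (hk : k < 4 ^ n) :
    dist (kochComplex n k) (kochComplex n (k + 1)) = (1 / 3) ^ n := by
  induction n generalizing k with
  | zero =>
    obtain rfl : k = 0 := by simpa using hk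
    simp [kochComplex_zero_zero, kochComplex_zero_one]
  | succ n ih =>
    have hdiv : k / 4 < 4 ^ n := Nat.div_lt_of_lt_mul (pow_succ' 4 n ▸ hk)
    have hmod : k % 4 < 4 := k.mod_lt four_pos
    rw [← Nat.div_add_mod k 4, add_assoc, kochComplex_succ _ _ hmod.le, kochComplex_succ _ _ hmod,
      dist_lineMap_lineMap, dist_kochGenerator_succ hmod, ih hdiv, pow_succ']

theorem kochComplex_apply_zero (n : ℕ) : kochComplex n 0 = 0 := by
  induction n with
  | zero => exact kochComplex_zero_zero
  | succ n ih => simpa [kochGenerator, ih] using kochComplex_succ n 0 (Nat.zero_le 4)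

/-! ### Reflection in the perpendicular bisector of the segment from `0` to `1` -/

theorem kochGenerator_reflection {i i' : ℕ} (h : i + i' = 4) :
    kochGenerator i' = 1 - conj (kochGenerator i) := by
  obtain rfl : i' = 4 - i := by omega
  have hi : i ≤ 4 := by omega
  apply Complex.ext <;> interval_cases i <;> simp [kochGenerator] <;> norm_num

theorem kochComplex_reflection (n : ℕ) {k k' : ℕ} (h : k + k' = 4 ^ n) :
    kochComplex n k' = 1 - conj (kochComplex n k) := by
  induction n generalizing k k' with
  | zero =>
    obtain ⟨rfl, rfl⟩ | ⟨rfl, rfl⟩ : k = 0 ∧ k' = 1 ∨ k = 1 ∧ k' = 0 := by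
      rw [pow_zero] at h; omega
    all_goals simp [kochComplex_zero_zero, kochComplex_zero_one]
  | succ n ih =>
    obtain ⟨i, hi, r, hr, rfl⟩ :=
      exists_eq_mul_add_of_le_mul four_pos (pow_succ 4 n ▸ h ▸ Nat.le_add_right k k')
    obtain ⟨i', hi'⟩ := Nat.exists_eq_add_of_le (Nat.le_of_lt_succ hi)
    obtain ⟨r', hr'⟩ := Nat.exists_eq_add_of_le hr
    obtain rfl : k' = 4 ^ n * i' + r' := by
      have : 4 ^ n * 4 = 4 ^ n * i + 4 ^ n * i' + 4 ^ n := by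
        rw [← mul_add, ← hi']; ring
      rw [pow_succ] at h
      omega
    rw [kochComplex_piece n (by omega) (by omega), kochComplex_piece n hi hr, ih hr'.symm,
      kochGenerator_reflection (show i + 1 + i' = 4 by omega),
      kochGenerator_reflection (show i + (i' + 1) = 4 by omega)]
    simp only [lineMap_apply, vsub_eq_sub, vadd_eq_add, smul_eq_mul, map_add, map_mul, map_sub]
    ring

theorem dist_kochComplex_reflection (n : ℕ) {j j' k k' : ℕ} (hj : j + j' = 4 ^ n)
    (hk : k + k' = 4 ^ n) :
    dist (kochComplex n j') (kochComplex n k') = dist (kochComplex n j) (kochComplex n k) := by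
  rw [kochComplex_reflection n hj, kochComplex_reflection n hk, dist_sub_left,
    Complex.dist_conj_conj]

theorem kochComplex_four_pow (n : ℕ) : kochComplex n (4 ^ n) = 1 := by
  simpa [kochComplex_apply_zero] using kochComplex_reflection n (zero_add (4 ^ n))

/-! ### The triangle containing the polyline -/

/-- The triangle with vertices `0`, `1` and `kochGenerator 2`, whose angles at `0` and `1` are
`30°`; it contains the Koch polylines of all stages. -/
def kochTriangle : Set ℂ :=
  {z | 0 ≤ z.im ∧ √3 * z.im ≤ z.re ∧ √3 * z.im ≤ 1 - z.re}

theorem one_sub_conj_mem_kochTriangle {z : ℂ} (hz : z ∈ kochTriangle) :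
    1 - conj z ∈ kochTriangle := by
  obtain ⟨him, hleft, hright⟩ := hz
  exact ⟨by simpa, by simpa, by simpa⟩

theorem lineMap_kochGenerator_mem_kochTriangle {i : ℕ} (hi : i < 4) {z : ℂ}
    (hz : z ∈ kochTriangle) :
    lineMap (kochGenerator i) (kochGenerator (i + 1)) z ∈ kochTriangle := by
  obtain ⟨him, hleft, hright⟩ := hz
  have h3 : √3 * √3 = 3 := Real.mul_self_sqrt zero_le_three
  have h0 : 0 ≤ √3 := Real.sqrt_nonneg 3
  have him' := mul_nonneg h0 him
  have hleft' := mul_le_mul_of_nonneg_left hleft h0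
  have hright' := mul_le_mul_of_nonneg_left hright h0
  refine ⟨?_, ?_, ?_⟩ <;> interval_cases i <;>
    simp only [re_lineMap, im_lineMap, kochGenerator, Complex.zero_re, Complex.zero_im,
      Complex.one_re, Complex.one_im] <;>
    nlinarith

theorem kochComplex_mem_kochTriangle (n : ℕ) {j : ℕ} (hj : j ≤ 4 ^ n) :
    kochComplex n j ∈ kochTriangle := by
  induction n generalizing j with
  | zero =>
    obtain rfl | rfl : j = 0 ∨ j = 1 := by rw [pow_zero] at hj; omega
    · simp [kochComplex_zero_zero, kochTriangle]
    · simp [kochComplex_zero_one, kochTriangle]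
  | succ n ih =>
    obtain ⟨i, hi, r, hr, rfl⟩ := exists_eq_mul_add_of_le_mul four_pos (pow_succ 4 n ▸ hj)
    rw [kochComplex_piece n hi hr]
    exact lineMap_kochGenerator_mem_kochTriangle hi (ih hr)

theorem dist_le_one_of_mem_kochTriangle {z w : ℂ} (hz : z ∈ kochTriangle)
    (hw : w ∈ kochTriangle) : dist z w ≤ 1 := by
  obtain ⟨hz_im, hz_left, hz_right⟩ := hz
  obtain ⟨hw_im, hw_left, hw_right⟩ := hw
  have h1 : 1 ≤ √3 := Real.one_le_sqrt.mpr (by norm_num)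
  have hz' : z.im ≤ √3 * z.im := le_mul_of_one_le_left hz_im h1
  have hw' : w.im ≤ √3 * w.im := le_mul_of_one_le_left hw_im h1
  calc dist z w ≤ |z.re - w.re| + |z.im - w.im| := by
        simpa [dist_eq_norm] using Complex.norm_le_abs_re_add_abs_im (z - w)
    _ ≤ 1 := by
        rcases abs_cases (z.re - w.re) with ⟨hre, _⟩ | ⟨hre, _⟩ <;>
          rcases abs_cases (z.im - w.im) with ⟨him, _⟩ | ⟨him, _⟩ <;> linarith

theorem dist_kochComplex_le_one (n : ℕ) {j k : ℕ} (hj : j ≤ 4 ^ n) (hk : k ≤ 4 ^ n) :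
    dist (kochComplex n j) (kochComplex n k) ≤ 1 :=
  dist_le_one_of_mem_kochTriangle (kochComplex_mem_kochTriangle n hj)
    (kochComplex_mem_kochTriangle n hk)

theorem re_lineMap_kochGenerator_mem_Icc {i : ℕ} (hi : i < 4) {z : ℂ} (hz : z ∈ kochTriangle) :
    (lineMap (kochGenerator i) (kochGenerator (i + 1)) z).re ∈
      Set.Icc (kochGenerator i).re (kochGenerator (i + 1)).re := by
  obtain ⟨him, hleft, hright⟩ := hz
  have him' := mul_nonneg (Real.sqrt_nonneg 3) him
  constructor <;> interval_cases i <;>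
    simp only [re_lineMap, kochGenerator, Complex.zero_re, Complex.zero_im, Complex.one_re,
      Complex.one_im] <;>
    linarith

theorem re_kochComplex_piece_mem_Icc (n : ℕ) {i r : ℕ} (hi : i < 4) (hr : r ≤ 4 ^ n) :
    (kochComplex (n + 1) (4 ^ n * i + r)).re ∈
      Set.Icc (kochGenerator i).re (kochGenerator (i + 1)).re := by
  rw [kochComplex_piece n hi hr]
  exact re_lineMap_kochGenerator_mem_Icc hi (kochComplex_mem_kochTriangle n hr)

theorem one_sixth_le_dist_kochComplex_of_add_one_lt (n : ℕ) {i i' r r' : ℕ} (hii' : i + 1 < i')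
    (hi' : i' < 4) (hr : r ≤ 4 ^ n) (hr' : r' ≤ 4 ^ n) :
    1 / 6 ≤ dist (kochComplex (n + 1) (4 ^ n * i + r))
      (kochComplex (n + 1) (4 ^ n * i' + r')) := by
  have hgap : 1 / 6 ≤ (kochGenerator i').re - (kochGenerator (i + 1)).re := by
    have hi : i < 2 := by omega
    interval_cases i <;> interval_cases i' <;> simp [kochGenerator] <;> norm_num
  have hright := (re_kochComplex_piece_mem_Icc n (by omega : i < 4) hr).2
  have hleft := (re_kochComplex_piece_mem_Icc n hi' hr').1
  rw [dist_comm, dist_eq_norm]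
  refine le_trans ?_ (Complex.re_le_norm _)
  rw [Complex.sub_re]
  linarith

/-! ### Bounded turning -/

theorem dist_kochComplex_le_of_le_end (n : ℕ) {j k b : ℕ} (hj : j ≤ b) (hk : k ≤ b)
    (hb : b ≤ 4 ^ n) :
    dist (kochComplex n j) (kochComplex n k) ≤ 3 * dist (kochComplex n 0) (kochComplex n b) := by
  induction n generalizing j k b with
  | zero =>
    have hone := dist_kochComplex_le_one 0 (hj.trans hb) (hk.trans hb)
    obtain rfl | rfl : b = 0 ∨ b = 1 := by rw [pow_zero] at hb; omega
    · obtain rfl : j = 0 := by omega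
      obtain rfl : k = 0 := by omega
      simp
    · simp only [kochComplex_zero_zero, kochComplex_zero_one, dist_zero_left, norm_one]
      linarith
  | succ n ih =>
    obtain ⟨i, hi, r, hr, rfl⟩ := exists_eq_mul_add_of_le_mul four_pos (pow_succ 4 n ▸ hb)
    rcases Nat.eq_zero_or_pos i with rfl | hpos
    · simp only [mul_zero, zero_add] at hj hk
      have hscale : ∀ {j k}, j ≤ r → k ≤ r →
          dist (kochComplex (n + 1) j) (kochComplex (n + 1) k) =
            dist (kochComplex n j) (kochComplex n k) / 3 := fun hj hk => by
        simpa using dist_kochComplex_piece n hi (hj.trans hr) (hk.trans hr)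
      rw [mul_zero, zero_add, hscale hj hk, hscale r.zero_le le_rfl]
      linarith [ih hj hk hr]
    · have hgen : 1 / 3 ≤ (kochGenerator i).re := by
        interval_cases i <;> simp [kochGenerator] <;> norm_num
      have hone := dist_kochComplex_le_one (n + 1) (hj.trans hb) (hk.trans hb)
      have hre := (re_kochComplex_piece_mem_Icc n hi hr).1
      have hnorm := Complex.re_le_norm (kochComplex (n + 1) (4 ^ n * i + r))
      rw [kochComplex_apply_zero, dist_zero_left]
      linarith

theorem dist_kochComplex_le_of_start_le (n : ℕ) {a j k : ℕ} (hj : a ≤ j) (hk : a ≤ k)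
    (hj' : j ≤ 4 ^ n) (hk' : k ≤ 4 ^ n) :
    dist (kochComplex n j) (kochComplex n k) ≤
      3 * dist (kochComplex n a) (kochComplex n (4 ^ n)) := by
  have hend := dist_kochComplex_le_of_le_end n (Nat.sub_le_sub_left hj (4 ^ n))
    (Nat.sub_le_sub_left hk (4 ^ n)) (Nat.sub_le _ _)
  rwa [dist_kochComplex_reflection n (Nat.add_sub_cancel' hj') (Nat.add_sub_cancel' hk'),
    dist_kochComplex_reflection n (add_zero (4 ^ n)) (Nat.add_sub_cancel' (hj.trans hj')),
    dist_comm (kochComplex n (4 ^ n))] at hend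

theorem sqrt_three_mul_re_add_abs_im_le (z : ℂ) : √3 * z.re + |z.im| ≤ 2 * ‖z‖ := by
  have h3 : √3 ^ 2 = 3 := Real.sq_sqrt zero_le_three
  refine le_of_sq_le_sq ?_ (by positivity)
  rw [mul_pow, Complex.sq_norm, Complex.normSq_apply]
  nlinarith [sq_nonneg (z.re - √3 * |z.im|), sq_abs z.im]

theorem norm_le_sqrt_three_mul_re_sub_im {z : ℂ} (him : 0 ≤ z.im) (hz : √3 * z.im ≤ z.re) :
    ‖z‖ ≤ √3 * z.re - z.im := by
  have h3 : √3 ^ 2 = 3 := Real.sq_sqrt zero_le_three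
  have h0 : 0 ≤ √3 := Real.sqrt_nonneg 3
  have hre : 0 ≤ z.re := (mul_nonneg h0 him).trans hz
  have hnonneg : 0 ≤ √3 * z.re - z.im := by nlinarith [mul_le_mul_of_nonneg_left hz h0]
  refine le_of_sq_le_sq ?_ hnonneg
  rw [Complex.sq_norm, Complex.normSq_apply]
  nlinarith [mul_le_mul_of_nonneg_left hz hre]

theorem norm_le_re_add_sqrt_three_mul_im {z : ℂ} (hre : 0 ≤ z.re) (him : 0 ≤ z.im) :
    ‖z‖ ≤ z.re + √3 * z.im := by
  have h1 : 1 ≤ √3 := Real.one_le_sqrt.mpr (by norm_num)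
  calc ‖z‖ ≤ |z.re| + |z.im| := Complex.norm_le_abs_re_add_abs_im z
    _ = z.re + z.im := by rw [abs_of_nonneg hre, abs_of_nonneg him]
    _ ≤ z.re + √3 * z.im := by gcongr; exact le_mul_of_one_le_left him h1

theorem dist_add_dist_le_of_mem_kochTriangle {i : ℕ} (hi : i < 3) {z w : ℂ}
    (hz : z ∈ kochTriangle) (hw : w ∈ kochTriangle) :
    dist z 1 + dist 0 w ≤ 6 * dist (lineMap (kochGenerator i) (kochGenerator (i + 1)) z)
      (lineMap (kochGenerator (i + 1)) (kochGenerator (i + 2)) w) := by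
  have h3 : √3 ^ 2 = 3 := Real.sq_sqrt zero_le_three
  have h0 : 0 ≤ √3 := Real.sqrt_nonneg 3
  obtain ⟨hz_im, hz_sector, -⟩ := one_sub_conj_mem_kochTriangle hz
  obtain ⟨hw_im, hw_sector, -⟩ := hw
  have hdist : dist z 1 = ‖1 - conj z‖ := by
    rw [dist_comm, dist_eq_norm, ← Complex.norm_conj, map_sub, map_one]
  rw [hdist, dist_zero_left, dist_comm, dist_eq_norm]
  set d := lineMap (kochGenerator (i + 1)) (kochGenerator (i + 2)) w -
    lineMap (kochGenerator i) (kochGenerator (i + 1)) z with hd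
  have hnorm := sqrt_three_mul_re_add_abs_im_le d
  have hz_norm := norm_le_sqrt_three_mul_re_sub_im hz_im hz_sector
  have hw_norm := norm_le_sqrt_three_mul_re_sub_im hw_im hw_sector
  have hz_norm' := norm_le_re_add_sqrt_three_mul_im ((mul_nonneg h0 hz_im).trans hz_sector) hz_im
  have hw_norm' := norm_le_re_add_sqrt_three_mul_im ((mul_nonneg h0 hw_im).trans hw_sector) hw_im
  -- `d` is the sum of the vectors from the image of `z` to the common vertex of the two pieces and
  -- from there to the image of `w`. Both make an angle of at most `60°` with the direction `30°`,
  -- `0°` or `-30°` for `i = 0, 1, 2`, so projecting onto it at most halves the norms.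
  interval_cases i
  · have hproj : 3 * (√3 * d.re + d.im) =
        (√3 * (1 - conj z).re - (1 - conj z).im) + (√3 * w.re - w.im) := by
      simp only [hd, Complex.sub_re, Complex.sub_im, Complex.one_re, Complex.one_im,
        Complex.conj_re, Complex.conj_im, re_lineMap, im_lineMap, kochGenerator, Complex.zero_re,
        Complex.zero_im]
      linear_combination (-w.im / 2) * h3
    linarith [le_abs_self d.im]
  · have hproj : 6 * d.re =
        ((1 - conj z).re + √3 * (1 - conj z).im) + (w.re + √3 * w.im) := by
      simp only [hd, Complex.sub_re, Complex.sub_im, Complex.one_re, Complex.one_im,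
        Complex.conj_re, Complex.conj_im, re_lineMap, kochGenerator]
      ring
    linarith [Complex.re_le_norm d]
  · have hproj : 3 * (√3 * d.re - d.im) =
        (√3 * (1 - conj z).re - (1 - conj z).im) + (√3 * w.re - w.im) := by
      simp only [hd, Complex.sub_re, Complex.sub_im, Complex.one_re, Complex.one_im,
        Complex.conj_re, Complex.conj_im, re_lineMap, im_lineMap, kochGenerator]
      linear_combination (-z.im / 2) * h3
    linarith [neg_le_abs d.im]

theorem dist_add_dist_le_of_adjacent (n : ℕ) {i r r' : ℕ} (hi : i < 3) (hr : r ≤ 4 ^ n)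
    (hr' : r' ≤ 4 ^ n) :
    dist (kochComplex n r) (kochComplex n (4 ^ n)) + dist (kochComplex n 0) (kochComplex n r') ≤
      6 * dist (kochComplex (n + 1) (4 ^ n * i + r))
        (kochComplex (n + 1) (4 ^ n * (i + 1) + r')) := by
  rw [kochComplex_four_pow, kochComplex_apply_zero, kochComplex_piece n (by omega) hr,
    kochComplex_piece n (by omega) hr']
  exact dist_add_dist_le_of_mem_kochTriangle hi (kochComplex_mem_kochTriangle n hr)
    (kochComplex_mem_kochTriangle n hr')

theorem dist_kochComplex_le_of_adjacent (n : ℕ) {i r r' j k : ℕ} (hi : i < 3) (hr : r ≤ 4 ^ n)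
    (hr' : r' ≤ 4 ^ n) (hj : 4 ^ n * i + r ≤ j) (hjk : j ≤ k) (hk : k ≤ 4 ^ n * (i + 1) + r') :
    dist (kochComplex (n + 1) j) (kochComplex (n + 1) k) ≤
      6 * dist (kochComplex (n + 1) (4 ^ n * i + r))
        (kochComplex (n + 1) (4 ^ n * (i + 1) + r')) := by
  refine le_trans ?_ (dist_add_dist_le_of_adjacent n hi hr hr')
  have hleft_nonneg : 0 ≤ dist (kochComplex n r) (kochComplex n (4 ^ n)) := dist_nonneg
  have hright_nonneg : 0 ≤ dist (kochComplex n 0) (kochComplex n r') := dist_nonneg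
  have hleft : ∀ {s t}, r ≤ s → r ≤ t → s ≤ 4 ^ n → t ≤ 4 ^ n →
      dist (kochComplex (n + 1) (4 ^ n * i + s)) (kochComplex (n + 1) (4 ^ n * i + t)) ≤
        dist (kochComplex n r) (kochComplex n (4 ^ n)) := by
    intro s t hrs hrt hs ht
    rw [dist_kochComplex_piece n (by omega) hs ht]
    linarith [dist_kochComplex_le_of_start_le n hrs hrt hs ht]
  have hright : ∀ {s t}, s ≤ r' → t ≤ r' →
      dist (kochComplex (n + 1) (4 ^ n * (i + 1) + s))
        (kochComplex (n + 1) (4 ^ n * (i + 1) + t)) ≤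
        dist (kochComplex n 0) (kochComplex n r') := by
    intro s t hs ht
    rw [dist_kochComplex_piece n (by omega) (hs.trans hr') (ht.trans hr')]
    linarith [dist_kochComplex_le_of_le_end n hs ht hr']
  have hcorner : 4 ^ n * (i + 1) = 4 ^ n * i + 4 ^ n := Nat.mul_succ _ _
  rcases le_total k (4 ^ n * (i + 1)) with hkc | hck
  · obtain ⟨s, rfl⟩ := Nat.exists_eq_add_of_le ((Nat.le_add_right _ r).trans hj)
    obtain ⟨t, rfl⟩ := Nat.exists_eq_add_of_le
      ((Nat.le_add_right _ r).trans (hj.trans hjk))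
    linarith [hleft (s := s) (t := t) (by omega) (by omega) (by omega) (by omega)]
  obtain ⟨t, rfl⟩ := Nat.exists_eq_add_of_le hck
  rcases le_total (4 ^ n * (i + 1)) j with hcj | hjc
  · obtain ⟨s, rfl⟩ := Nat.exists_eq_add_of_le hcj
    linarith [hright (s := s) (t := t) (by omega) (by omega)]
  · obtain ⟨s, rfl⟩ := Nat.exists_eq_add_of_le ((Nat.le_add_right _ r).trans hj)
    have hstart := hleft (s := s) (t := 4 ^ n) (by omega) hr (by omega) le_rfl
    have hend := hright (s := 0) (t := t) r'.zero_le (by omega)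
    rw [← hcorner] at hstart
    exact (dist_triangle _ _ _).trans (add_le_add hstart hend)

theorem dist_kochComplex_le (n : ℕ) {a b j k : ℕ} (haj : a ≤ j) (hjk : j ≤ k) (hkb : k ≤ b)
    (hb : b ≤ 4 ^ n) :
    dist (kochComplex n j) (kochComplex n k) ≤ 6 * dist (kochComplex n a) (kochComplex n b) := by
  induction n generalizing a b j k with
  | zero =>
    rcases hjk.eq_or_lt with rfl | hjk
    · simp
    · obtain ⟨rfl, rfl⟩ : a = j ∧ b = k := by rw [pow_zero] at hb; omega
      linarith [dist_nonneg (x := kochComplex 0 a) (y := kochComplex 0 b)]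
  | succ n ih =>
    have hab := haj.trans (hjk.trans hkb)
    obtain ⟨i, hi, r, hr, rfl⟩ :=
      exists_eq_mul_add_of_le_mul four_pos (pow_succ 4 n ▸ hab.trans hb)
    obtain ⟨i', hi', r', hr', rfl⟩ := exists_eq_mul_add_of_le_mul four_pos (pow_succ 4 n ▸ hb)
    rcases lt_trichotomy i' (i + 1) with hlt | rfl | hlt
    · rcases (Nat.le_of_lt_succ hlt).eq_or_lt with rfl | hlt
      · obtain ⟨s, rfl⟩ := Nat.exists_eq_add_of_le ((Nat.le_add_right _ r).trans haj)
        obtain ⟨t, rfl⟩ := Nat.exists_eq_add_of_le ((Nat.le_add_right _ r).trans (haj.trans hjk))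
        rw [dist_kochComplex_piece n hi (by omega) (by omega), dist_kochComplex_piece n hi hr hr']
        linarith [ih (show r ≤ s by omega) (show s ≤ t by omega) (show t ≤ r' by omega) hr']
      · have hle : 4 ^ n * (i' + 1) ≤ 4 ^ n * i := Nat.mul_le_mul_left _ hlt
        obtain rfl : j = k := by rw [mul_add] at hle; omega
        simp
    · exact dist_kochComplex_le_of_adjacent n (by omega) hr hr' haj hjk hkb
    · linarith [dist_kochComplex_le_one (n + 1) ((hjk.trans hkb).trans hb) (hkb.trans hb),
        one_sixth_le_dist_kochComplex_of_add_one_lt n hlt hi' hr hr']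

/-! ### The two spanner properties -/

theorem hausdorffDist_koch_segment_le (n : ℕ) {a b : ℕ} (hab : a < b) (hb : b ≤ 4 ^ n) :
    Metric.hausdorffDist (⋃ k ∈ Finset.Ico a b, segment ℝ (koch n k) (koch n (k + 1)))
      (segment ℝ (koch n a) (koch n b)) ≤ 6 * dist (koch n a) (koch n b) := by
  refine hausdorffDist_polyline_segment_le hab fun k hak hkb => ?_
  simpa only [dist_kochComplex] using dist_kochComplex_le n le_rfl hak hkb hb

theorem sum_dist_koch_eq {n m : ℕ} {q : Fin (m + 1) → ℕ} (hq : ∀ j, q j ≤ 4 ^ n)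
    (hstep : ∀ j : Fin m, q j.succ = q j.castSucc + 1 ∨ q j.castSucc = q j.succ + 1) :
    ∑ j : Fin m, dist (koch n (q j.castSucc)) (koch n (q j.succ)) = m * (1 / 3) ^ n := by
  have hedge : ∀ j : Fin m, dist (koch n (q j.castSucc)) (koch n (q j.succ)) = (1 / 3) ^ n := by
    intro j
    rw [← dist_kochComplex]
    rcases hstep j with h | h
    · rw [h]
      exact dist_kochComplex_succ n (by have := hq j.succ; omega)
    · rw [h, dist_comm]
      exact dist_kochComplex_succ n (by have := hq j.castSucc; omega)
  simp [hedge]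

theorem four_thirds_pow_le_sum_dist_koch {n m : ℕ} {q : Fin (m + 1) → ℕ} (hzero : q 0 = 0)
    (hlast : q (Fin.last m) = 4 ^ n) (hq : ∀ j, q j ≤ 4 ^ n)
    (hstep : ∀ j : Fin m, q j.succ = q j.castSucc + 1 ∨ q j.castSucc = q j.succ + 1) :
    (4 / 3) ^ n ≤ ∑ j : Fin m, dist (koch n (q j.castSucc)) (koch n (q j.succ)) := by
  have hm : 4 ^ n ≤ m := by
    simpa [hzero, hlast] using
      apply_last_le_add_of_succ_le (q := q) fun j => by have := hstep j; omega
  calc (4 / 3 : ℝ) ^ n = (4 ^ n : ℕ) * (1 / 3) ^ n := by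
        rw [Nat.cast_pow, ← mul_pow]; norm_num
    _ ≤ m * (1 / 3) ^ n := by gcongr
    _ = _ := (sum_dist_koch_eq hq hstep).symm

theorem dist_koch_zero_four_pow (n : ℕ) : dist (koch n 0) (koch n (4 ^ n)) = 1 := by
  simp [← dist_kochComplex, kochComplex_apply_zero, kochComplex_four_pow]

/-- For every `t ≥ 1` there is a stage `n` of the Koch construction such that the path
graph `F_n` is a `6`-Hausdorff-spanner but not a `t`-spanner: (a) between any two vertices
the path between them stays within Hausdorff distance `6` times their distance from the
straight segment, while (b) every walk in `F_n` between the two extreme vertices is longer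
than `t` times their distance. -/
theorem koch_hausdorff_spanner_not_t_spanner (t : ℝ) (ht : 1 ≤ t) :
    ∃ n : ℕ,
      (∀ a b : ℕ, a < b → b ≤ 4 ^ n →
        Metric.hausdorffDist (⋃ k ∈ Finset.Ico a b, segment ℝ (koch n k) (koch n (k + 1)))
          (segment ℝ (koch n a) (koch n b)) ≤ 6 * dist (koch n a) (koch n b)) ∧
      (∀ m : ℕ, 1 ≤ m → ∀ q : Fin (m + 1) → ℕ,
        q 0 = 0 → q (Fin.last m) = 4 ^ n → (∀ j, q j ≤ 4 ^ n) →
        (∀ j : Fin m, q j.succ = q j.castSucc + 1 ∨ q j.castSucc = q j.succ + 1) →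
        t * dist (koch n 0) (koch n (4 ^ n)) <
          ∑ j : Fin m, dist (koch n (q j.castSucc)) (koch n (q j.succ))) := by
  obtain ⟨n, hn⟩ := pow_unbounded_of_one_lt t (by norm_num : (1 : ℝ) < 4 / 3)
  refine ⟨n, fun a b hab hb => hausdorffDist_koch_segment_le n hab hb, ?_⟩
  intro m _ q hzero hlast hq hstep
  rw [dist_koch_zero_four_pow, mul_one]
  exact hn.trans_le (four_thirds_pow_le_sum_dist_koch hzero hlast hq hstep)
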